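/- arXiv:2208.05897 — 2 statements merged into one kernel-verified Lean document; each statement's English description precedes it below -/
import Mathlib

section
/- For every integer n with 1 ≤ n ≤ N, the value in state 0 satisfies the maximization identity V_{n-1}(0) = max over p ∈ [c, 1] of ( p/N + (1 - p/n)·V_n(0) ), where the maximum over the interval is attained; moreover V_0(0) = V_1(1) = π*_N. -/
/-!
Write `v = V_n(0)`. The objective `p ↦ p/N + (1 - p/n)·v` is affine in `p`, so its maximum over
`[c, 1]` is attained at an endpoint and equals
`max (c/N + (1 - c/n)·v) (1/N + (1 - 1/n)·v)` (`isGreatest_affine`).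
The recursion produces the same maximum (`secV_pred_fst`): for `n ≥ 2`, dividing
`V_n(1) = max (c·n/N + (1-c)·v) (n/N)` by `n` and adding `(n-1)/n·v` gives these two endpoint
values, and for `n = 1` this is the definition of `V_0(0)`, which is also that of `V_1(1)`.
-/

open Finset Filter Topology

/-- Threshold `n*_N = min{ n ∈ {1,…,N} : ∑_{k=n}^{N-1} 1/k ≤ 1 }`
(the sum is empty, equal to 0, when `n = N`, so the minimum exists). -/
noncomputable def nstar (N : ℕ) : ℕ :=
  sInf {n : ℕ | 1 ≤ n ∧ n ≤ N ∧ ∑ k ∈ Finset.Ico n N, (1 : ℝ) / k ≤ 1}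

/-- Value functions: `(secV c N n).1` is `V_{n,N}(0)` and `(secV c N n).2` is `V_{n,N}(1)`,
defined by backward recursion: `V_{N,N}(0) = 0`, `V_{N,N}(1) = 1`; for `1 ≤ n ≤ N-1`,
`V_{n,N}(0) = (1/(n+1))·V_{n+1,N}(1) + (n/(n+1))·V_{n+1,N}(0)` and
`V_{n,N}(1) = max{ c·(n/N) + (1-c)·V_{n,N}(0), n/N }`; and
`V_{0,N}(0) = max{ c/N + (1-c)·V_{1,N}(0), 1/N }` (the value `V_{0,N}(1)` is unused, set to 0). -/
noncomputable def secV (c : ℝ) (N : ℕ) (n : ℕ) : ℝ × ℝ :=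
  if _h : N ≤ n then (0, 1)
  else
    let next := secV c N (n + 1)
    if n = 0 then
      (max (c / N + (1 - c) * next.1) (1 / N), 0)
    else
      let v0 := (1 / ((n : ℝ) + 1)) * next.2 + ((n : ℝ) / ((n : ℝ) + 1)) * next.1
      (v0, max (c * ((n : ℝ) / N) + (1 - c) * v0) ((n : ℝ) / N))
termination_by N - n
decreasing_by omega

/-- The defining recursion for `V_n(1)`. It extends to `n = N`, because `V_N(0) = 0` and `c ≤ 1`
give `max c 1 = 1 = V_N(1)`. -/
lemma secV_snd (N : ℕ) (c : ℝ) (hc1 : c ≤ 1) (n : ℕ) (hn : 1 ≤ n) (hnN : n ≤ N) :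
    (secV c N n).2 =
      max (c * ((n : ℝ) / N) + (1 - c) * (secV c N n).1) ((n : ℝ) / N) := by
  rcases hnN.eq_or_lt with rfl | h
  · have h0 : (n : ℝ) ≠ 0 := by positivity
    rw [secV]
    simp [h0, hc1]
  · rw [secV, dif_neg (by omega), if_neg (by omega)]

/-- One backward step in state 0: `V_{n-1}(0)` is the larger of the two endpoint values, at `p = c`
and at `p = 1`, of the objective `p/N + (1 - p/n)·V_n(0)`. -/
lemma secV_pred_fst (N : ℕ) (c : ℝ) (hc1 : c ≤ 1) (n : ℕ) (hn : 1 ≤ n) (hnN : n ≤ N) :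
    (secV c N (n - 1)).1 =
      max (c / N + (1 - c / n) * (secV c N n).1) (1 / N + (1 - 1 / n) * (secV c N n).1) := by
  obtain ⟨m, rfl⟩ : ∃ m, n = m + 1 := ⟨n - 1, by omega⟩
  rw [Nat.add_sub_cancel]
  have hN0 : (N : ℝ) ≠ 0 := by
    have : N ≠ 0 := by omega
    exact_mod_cast this
  rcases Nat.eq_zero_or_pos m with rfl | hm
  · rw [secV, dif_neg (by omega), if_pos rfl]
    simp
  · rw [secV, dif_neg (by omega), if_neg (by omega)]
    have hm1 : (0 : ℝ) < (m : ℝ) + 1 := by positivity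
    simp only [secV_snd N c hc1 (m + 1) hn hnN]
    rw [mul_max_of_nonneg _ _ (by positivity), max_add]
    push_cast
    congr 1 <;> field_simp <;> ring

/-- An affine objective attains its maximum over `[c, 1]` at an endpoint; its slope is
`1/N - v/n`. -/
lemma isGreatest_affine (N n v c : ℝ) (hc : c ≤ 1) :
    IsGreatest ((fun p : ℝ => p / N + (1 - p / n) * v) '' Set.Icc c 1)
      (max (c / N + (1 - c / n) * v) (1 / N + (1 - 1 / n) * v)) := by
  have key (p : ℝ) : p / N + (1 - p / n) * v = v + p * (1 / N - v / n) := by ring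
  constructor
  · rcases max_choice (c / N + (1 - c / n) * v) (1 / N + (1 - 1 / n) * v) with h | h
    · exact ⟨c, ⟨le_rfl, hc⟩, h.symm⟩
    · exact ⟨1, ⟨hc, le_rfl⟩, h.symm⟩
  · rintro _ ⟨p, ⟨hcp, hp1⟩, rfl⟩
    simp only [key, le_max_iff]
    rcases le_total 0 (1 / N - v / n) with h | h
    · exact .inr (by linarith [mul_le_mul_of_nonneg_right hp1 h])
    · exact .inl (by linarith [mul_le_mul_of_nonpos_right hcp h])

/-- For `1 ≤ n ≤ N`, the value in state 0 satisfies the maximization identity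
`V_{n-1}(0) = max_{p ∈ [c,1]} ( p/N + (1 - p/n)·V_n(0) )`, the maximum being attained;
moreover `V_0(0) = V_1(1) = π*_N`. -/
theorem value_zero_max (N : ℕ) (hN : 2 ≤ N) (c : ℝ) (hc0 : 0 ≤ c) (hc1 : c < 1) :
    (∀ n : ℕ, 1 ≤ n → n ≤ N →
      IsGreatest ((fun p : ℝ => p / N + (1 - p / (n : ℝ)) * (secV c N n).1) '' Set.Icc c 1)
        ((secV c N (n - 1)).1)) ∧
    (secV c N 0).1 = (secV c N 1).2 := by
  refine ⟨fun n hn hnN => ?_, ?_⟩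
  · rw [secV_pred_fst N c hc1.le n hn hnN]
    exact isGreatest_affine N n _ c hc1.le
  · rw [secV_snd N c hc1.le 1 le_rfl (by omega), secV, dif_neg (by omega), if_pos rfl]
    simp [div_eq_mul_inv]
end

section
/- For every real number c with 0 ≤ c < 1, the sequence N^{c-1} · c · ∑_{n=1}^{n*_N - 1} S_{n-1}(c) converges to (c/(1-c)) · e^{c-1} / Γ(1-c) as N → ∞, where e is Euler's number and Γ is the real Gamma function. -/
/-!
The sum telescopes: `(1 - c) ∑_{n=1}^{m+1} S_{n-1}(c) = (m+1) S_{m+1}(c)`, and the right-hand side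
is exactly `m ^ (1-c)` divided by Euler's sequence `Real.GammaSeq (1 - c) m`, which tends to
`Γ(1 - c)`. So everything reduces to `n*_N / N → 1/e`. Comparing `∑ 1/k` with logarithms gives the
explicit bounds `N/e ≤ n*_N` and `n*_N - 2 ≤ N/e`. With `m = n*_N - 2`, the expression is eventually
`(m/N)^(1-c) · (c/(1-c)) / GammaSeq (1-c) m`, and the limit follows.
-/

open Finset Filter Topology

/-- `S_n(c) = ∏_{k=1}^n (1 - c/k)`, with `S_0(c) = 1` (empty product). -/
noncomputable def Sprod (c : ℝ) (n : ℕ) : ℝ :=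
  ∏ k ∈ Finset.Icc 1 n, (1 - c / (k : ℝ))

theorem log_sub_log_le_sum (n N : ℕ) (hn : 1 ≤ n) (h : n ≤ N) :
    Real.log N - Real.log n ≤ ∑ k ∈ Finset.Ico n N, (1 : ℝ) / k := by
  induction N, h using Nat.le_induction with
  | base => simp
  | succ M hM ih =>
    rw [Finset.sum_Ico_succ_top hM]
    have hM0 : (0 : ℝ) < M := by exact_mod_cast (by omega : 0 < M)
    have h1 := Real.log_le_sub_one_of_pos (x := ((M : ℝ) + 1) / M) (by positivity)
    rw [Real.log_div (by positivity) (by positivity)] at h1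
    have h2 : ((M : ℝ) + 1) / M - 1 = 1 / M := by field_simp; ring
    push_cast
    linarith

theorem sum_le_log_sub_log (m M : ℕ) (hm : 1 ≤ m) (h : m ≤ M) :
    ∑ k ∈ Finset.Ico (m + 1) (M + 1), (1 : ℝ) / k ≤ Real.log M - Real.log m := by
  induction M, h using Nat.le_induction with
  | base => simp
  | succ M hM ih =>
    rw [Finset.sum_Ico_succ_top (by omega)]
    have hM0 : (0 : ℝ) < M := by exact_mod_cast (by omega : 0 < M)
    have h1 := Real.log_le_sub_one_of_pos (x := (M : ℝ) / (M + 1)) (by positivity)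
    rw [Real.log_div (by positivity) (by positivity)] at h1
    have h2 : (M : ℝ) / (M + 1) - 1 = -(1 / (M + 1)) := by field_simp; ring
    push_cast at *
    linarith

theorem nstar_mem {N : ℕ} (hN : 1 ≤ N) :
    1 ≤ nstar N ∧ nstar N ≤ N ∧ ∑ k ∈ Finset.Ico (nstar N) N, (1 : ℝ) / k ≤ 1 :=
  Nat.sInf_mem (s := {n : ℕ | 1 ≤ n ∧ n ≤ N ∧ ∑ k ∈ Finset.Ico n N, (1 : ℝ) / k ≤ 1})
    ⟨N, hN, le_rfl, by simp⟩

theorem le_nstar {N : ℕ} (hN : 1 ≤ N) : (N : ℝ) * Real.exp (-1) ≤ nstar N := by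
  obtain ⟨h1, h2, h3⟩ := nstar_mem hN
  have h4 := log_sub_log_le_sum _ _ h1 h2
  have hN0 : (0 : ℝ) < N := by exact_mod_cast hN
  have hn0 : (0 : ℝ) < nstar N := by exact_mod_cast h1
  rw [← Real.log_le_log_iff (by positivity) hn0, Real.log_mul (by positivity) (by positivity),
    Real.log_exp]
  linarith

/-- Minimality of `n*_N` makes the sum starting at `n*_N - 1` exceed `1`. -/
theorem nstar_sub_two_le {N : ℕ} (hN : 1 ≤ N) :
    ((nstar N - 2 : ℕ) : ℝ) ≤ N * Real.exp (-1) := by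
  obtain ⟨h1, h2, h3⟩ := nstar_mem hN
  have hN0 : (0 : ℝ) < N := by exact_mod_cast hN
  rcases Nat.eq_zero_or_pos (nstar N - 2) with h | h
  · rw [h]; simp only [Nat.cast_zero]; positivity
  · have hlt : nstar N - 1 < nstar N := by omega
    -- the sum from `n*_N - 2 + 1` to `N - 1` exceeds 1 and is at most `log (N - 1) - log (n*_N - 2)`
    have hnot := Nat.notMem_of_lt_sInf hlt
    have hgt : 1 < ∑ k ∈ Finset.Ico (nstar N - 1) N, (1 : ℝ) / k := by
      by_contra! hle
      exact hnot ⟨by omega, by omega, hle⟩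
    have h5 := sum_le_log_sub_log (nstar N - 2) (N - 1) h (by omega)
    rw [show nstar N - 2 + 1 = nstar N - 1 by omega, show N - 1 + 1 = N by omega] at h5
    have hm0 : (0 : ℝ) < (nstar N - 2 : ℕ) := by exact_mod_cast h
    have h6 : Real.log (N - 1 : ℕ) ≤ Real.log N :=
      Real.log_le_log (by exact_mod_cast (by omega : 0 < N - 1)) (by exact_mod_cast Nat.sub_le N 1)
    rw [← Real.log_le_log_iff hm0 (by positivity), Real.log_mul (by positivity) (by positivity),
      Real.log_exp]
    linarith

theorem tendsto_nstar_div :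
    Tendsto (fun N : ℕ => ((nstar N - 2 : ℕ) : ℝ) / N) atTop (𝓝 (Real.exp (-1))) := by
  have hlow : Tendsto (fun N : ℕ => Real.exp (-1) - 2 / (N : ℝ)) atTop (𝓝 (Real.exp (-1))) := by
    simpa using tendsto_const_nhds.sub (tendsto_const_div_atTop_nhds_zero_nat (2 : ℝ))
  refine tendsto_of_tendsto_of_tendsto_of_le_of_le' hlow tendsto_const_nhds ?_ ?_
  · filter_upwards [eventually_ge_atTop 1] with N hN
    have hN0 : (0 : ℝ) < N := by exact_mod_cast hN
    have h1 := le_nstar hN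
    have h2 : (nstar N : ℝ) ≤ (nstar N - 2 : ℕ) + 2 := by exact_mod_cast (by omega)
    rw [le_div_iff₀ hN0, sub_mul, div_mul_cancel₀ _ hN0.ne']
    linarith
  · filter_upwards [eventually_ge_atTop 1] with N hN
    have hN0 : (0 : ℝ) < N := by exact_mod_cast hN
    rw [div_le_iff₀ hN0, mul_comm]
    exact nstar_sub_two_le hN

theorem tendsto_nstar_sub_two : Tendsto (fun N : ℕ => nstar N - 2) atTop atTop := by
  have h := tendsto_nstar_div.pos_mul_atTop (Real.exp_pos _) (tendsto_natCast_atTop_atTop (R := ℝ))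
  rw [← tendsto_natCast_atTop_iff (R := ℝ)]
  refine h.congr' ?_
  filter_upwards [eventually_ge_atTop 1] with N hN
  have hN0 : (0 : ℝ) < N := by exact_mod_cast hN
  exact div_mul_cancel₀ _ hN0.ne'

theorem Sprod_succ (c : ℝ) (m : ℕ) :
    (m + 1) * Sprod c (m + 1) = (m + 1 - c) * Sprod c m := by
  unfold Sprod
  rw [Finset.prod_Icc_succ_top (by omega)]
  have : (m : ℝ) + 1 ≠ 0 := by positivity
  push_cast
  field_simp

/-- Closed form of the partial sums: by `Sprod_succ`, the increment of `m * S_m` from `m` to `m + 1`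
is `(1 - c) * S_m`. -/
theorem sum_Sprod (c : ℝ) (m : ℕ) :
    (1 - c) * ∑ n ∈ Finset.Icc 1 m, Sprod c (n - 1) = m * Sprod c m := by
  induction m with
  | zero => simp
  | succ m ih =>
    rw [Finset.sum_Icc_succ_top (by omega), mul_add, ih]
    push_cast
    rw [Sprod_succ]
    ring

/-- Identifies the denominator of `Real.GammaSeq (1 - c) m`. -/
theorem prod_eq_factorial_mul_Sprod (c : ℝ) (m : ℕ) :
    ∏ j ∈ Finset.range (m + 1), (1 - c + (j : ℝ)) = m.factorial * ((m + 1) * Sprod c (m + 1)) := by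
  induction m with
  | zero => simp [Sprod]
  | succ m ih =>
    rw [Finset.prod_range_succ, ih, Nat.factorial_succ]
    have := Sprod_succ c (m + 1)
    push_cast at this ⊢
    rw [this]
    ring

theorem sum_eq_div_GammaSeq {c : ℝ} (hc1 : c < 1) (m : ℕ) (hm : 0 < m) :
    ∑ n ∈ Finset.Icc 1 (m + 1), Sprod c (n - 1) =
      (m : ℝ) ^ (1 - c) / ((1 - c) * Real.GammaSeq (1 - c) m) := by
  have hc : 0 < 1 - c := by linarith
  have hm0 : (0 : ℝ) < m := by exact_mod_cast hm
  have hp : 0 < ∏ j ∈ Finset.range (m + 1), (1 - c + (j : ℝ)) :=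
    Finset.prod_pos fun j _ => by positivity
  have hf : (0 : ℝ) < m.factorial := by exact_mod_cast m.factorial_pos
  have hr : 0 < (m : ℝ) ^ (1 - c) := by positivity
  have h1 := sum_Sprod c (m + 1)
  unfold Real.GammaSeq
  rw [prod_eq_factorial_mul_Sprod] at hp ⊢
  push_cast at h1
  rw [← h1] at hp ⊢
  generalize ∑ n ∈ Finset.Icc 1 (m + 1), Sprod c (n - 1) = T at *
  have hT : T ≠ 0 := by rintro rfl; simp at hp
  field_simp

/-- For every real `c` with `0 ≤ c < 1`, the sequence
`N^{c-1}·c·∑_{n=1}^{n*_N-1} S_{n-1}(c)` converges to `(c/(1-c))·e^{c-1}/Γ(1-c)`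
as `N → ∞`. -/
theorem first_term_tendsto (c : ℝ) (hc0 : 0 ≤ c) (hc1 : c < 1) :
    Filter.Tendsto
      (fun N : ℕ => (N : ℝ) ^ (c - 1) * c *
        ∑ n ∈ Finset.Icc 1 (nstar N - 1), Sprod c (n - 1))
      Filter.atTop (nhds ((c / (1 - c)) * Real.exp (c - 1) / Real.Gamma (1 - c))) := by
  have hc : 0 < 1 - c := by linarith
  have hG := (Real.GammaSeq_tendsto_Gamma (1 - c)).comp tendsto_nstar_sub_two
  have hR := tendsto_nstar_div.rpow_const (p := 1 - c) (Or.inr hc.le)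
  have hlim := (hR.mul_const (c / (1 - c))).div hG (Real.Gamma_pos_of_pos hc).ne'
  have hval : Real.exp (-1) ^ (1 - c) * (c / (1 - c)) / Real.Gamma (1 - c) =
      (c / (1 - c)) * Real.exp (c - 1) / Real.Gamma (1 - c) := by
    rw [← Real.exp_mul, show -1 * (1 - c) = c - 1 by ring, mul_comm]
  rw [hval] at hlim
  refine hlim.congr' ?_
  filter_upwards [eventually_ge_atTop 1, tendsto_nstar_sub_two.eventually_gt_atTop 0] with N hN hm
  have hN0 : (0 : ℝ) < N := by exact_mod_cast hN
  rw [show nstar N - 1 = nstar N - 2 + 1 by omega, sum_eq_div_GammaSeq hc1 _ hm]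
  simp only [Pi.div_apply, Function.comp_apply]
  rw [Real.div_rpow (by positivity) hN0.le, show c - 1 = -(1 - c) by ring,
    Real.rpow_neg hN0.le]
  simp only [div_eq_mul_inv, mul_inv]
  ring
end
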